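/- Let V be a nonempty finite type, let w be a conductance function on V whose support graph G_w is connected, and let L be its weighted Laplacian. If x ≠ y and f : V → ℝ satisfies L f = δ_x − δ_y, then f x − f y > 0; that is, the effective resistance r(x, y) between two distinct points of a connected network is strictly positive. -/

import Mathlib

open Finset

/-!
Summation by parts turns the pairing of `f` with `L f` into half the Dirichlet energy
`∑ x, ∑ y, w x y * (f x - f y) ^ 2`. For `L f = δ_x - δ_y` the pairing is `f x - f y`, which is
therefore nonnegative. If it vanished, then every current `w t s * (f t - f s)` would vanish, so
no current could leave `x`, contradicting `L f x = 1`.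
-/

section WeightedLaplacian

variable {V R : Type*} [Fintype V] [CommRing R] {w : V → V → R}

/-- The Laplacian of the network on `V` with edge conductances `w`: if `f` is a potential, its
value at `x` is the net current flowing out of `x`. -/
def weightedLaplacian (w : V → V → R) (f : V → R) (x : V) : R :=
  ∑ y, w x y * (f x - f y)

/-- The Dirichlet form of the network with edge conductances `w`, used here for the energy
`dirichletForm w f f` of a potential `f`. The sum is over ordered pairs, so that each edge counts
twice; this avoids dividing by `2` in `R`. -/
def dirichletForm (w : V → V → R) (f g : V → R) : R :=
  ∑ x, ∑ y, w x y * ((f x - f y) * (g x - g y))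

theorem dirichletForm_eq_two_mul_dotProduct (hsymm : ∀ x y, w x y = w y x) (f g : V → R) :
    dirichletForm w f g = 2 * (f ⬝ᵥ weightedLaplacian w g) := by
  have h_left : f ⬝ᵥ weightedLaplacian w g = ∑ x, ∑ y, f x * (w x y * (g x - g y)) := by
    simp only [dotProduct, weightedLaplacian, mul_sum]
  have h_right : f ⬝ᵥ weightedLaplacian w g = ∑ x, ∑ y, f y * (w x y * (g y - g x)) := by
    rw [h_left, sum_comm]
    simp only [hsymm]
  calc dirichletForm w f g
      = ∑ x, ∑ y, (f x * (w x y * (g x - g y)) + f y * (w x y * (g y - g x))) :=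
        sum_congr rfl fun x _ => sum_congr rfl fun y _ => by ring
    _ = f ⬝ᵥ weightedLaplacian w g + f ⬝ᵥ weightedLaplacian w g := by
        simp only [sum_add_distrib, ← h_left, ← h_right]
    _ = 2 * (f ⬝ᵥ weightedLaplacian w g) := (two_mul _).symm

variable [LinearOrder R] [IsStrictOrderedRing R]

theorem dirichletForm_self_nonneg (hnonneg : ∀ x y, 0 ≤ w x y) (f : V → R) :
    0 ≤ dirichletForm w f f :=
  sum_nonneg fun x _ => sum_nonneg fun y _ => mul_nonneg (hnonneg x y) (mul_self_nonneg _)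

theorem dirichletForm_self_eq_zero_iff (hnonneg : ∀ x y, 0 ≤ w x y) {f : V → R} :
    dirichletForm w f f = 0 ↔ ∀ x y, w x y * (f x - f y) = 0 := by
  have h_term (x y : V) : 0 ≤ w x y * ((f x - f y) * (f x - f y)) :=
    mul_nonneg (hnonneg x y) (mul_self_nonneg _)
  simp only [dirichletForm, sum_eq_zero_iff_of_nonneg fun x _ => sum_nonneg fun y _ => h_term x y,
    sum_eq_zero_iff_of_nonneg fun y _ => h_term _ y, mem_univ, forall_const, mul_eq_zero, or_self]

theorem dotProduct_weightedLaplacian_pos (hsymm : ∀ x y, w x y = w y x)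
    (hnonneg : ∀ x y, 0 ≤ w x y) {f : V → R} (hf : weightedLaplacian w f ≠ 0) :
    0 < f ⬝ᵥ weightedLaplacian w f := by
  have h_energy : 0 < dirichletForm w f f := by
    refine (dirichletForm_self_nonneg hnonneg f).lt_of_ne' fun h_zero => hf ?_
    have h_current := (dirichletForm_self_eq_zero_iff hnonneg).mp h_zero
    exact funext fun x => sum_eq_zero fun y _ => h_current x y
  rw [dirichletForm_eq_two_mul_dotProduct hsymm] at h_energy
  exact pos_of_mul_pos_right h_energy zero_le_two

theorem stmt_6_general [DecidableEq V] (hsymm : ∀ x y, w x y = w y x)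
    (hnonneg : ∀ x y, 0 ≤ w x y) {x y : V} (hxy : x ≠ y) {f : V → R}
    (hf : weightedLaplacian w f = Pi.single x 1 - Pi.single y 1) :
    0 < f x - f y := by
  have h_ne : weightedLaplacian w f ≠ 0 := fun h_zero => by
    have h_source := congrFun (hf.symm.trans h_zero) x
    simp [hxy] at h_source
  simpa [hf, dotProduct_sub] using dotProduct_weightedLaplacian_pos hsymm hnonneg h_ne

end WeightedLaplacian

/-- The effective resistance between two distinct points of a connected network is
strictly positive: if `L f = δ_x − δ_y` with `x ≠ y` then `f x − f y > 0`. -/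
theorem stmt_6 {V : Type*} [Fintype V] [Nonempty V] [DecidableEq V]
    (w : V → V → ℝ)
    (hsymm : ∀ x y, w x y = w y x)
    (hnonneg : ∀ x y, 0 ≤ w x y)
    (hdiag : ∀ x, w x x = 0)
    (L : (V → ℝ) → (V → ℝ))
    (hL : ∀ f x, L f x = ∑ y', w x y' * (f x - f y'))
    (G : SimpleGraph V)
    (hG : ∀ x y, G.Adj x y ↔ x ≠ y ∧ 0 < w x y)
    (hconn : G.Connected)
    (x y : V) (hxy : x ≠ y) (f : V → ℝ)
    (hf : L f = (fun t => (if t = x then (1 : ℝ) else 0) - (if t = y then (1 : ℝ) else 0))) :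
    0 < f x - f y := by
  refine stmt_6_general hsymm hnonneg hxy ((funext (hL f)).symm.trans (hf.trans ?_))
  simp only [funext_iff, Pi.sub_apply, Pi.single_apply, implies_true]
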